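/- Let m ∈ ℕ with m ≥ 2 and let ε ∈ (0, 1/2). Suppose z ∈ ℂ_1^n satisfies ℓ_1(z, z*) ≤ ε² and z = F_1(z), and V ∈ 𝒱_m satisfies ℓ_m(V, z*) ≤ ε² and V = F_m(V). Then for every real δ ≥ 2√2·(6ε + σ‖W‖/n), one has ℓ_m(V, z) ≤ (8/n)·Σ_{j=1}^n 1{|[Yz]_j| < δn}. -/

import Mathlib

open scoped Classical
open Matrix

noncomputable section

namespace PhaseSync

/-- Euclidean norm of a complex vector. -/
def enorm {k : ℕ} (v : Fin k → ℂ) : ℝ := Real.sqrt (∑ i, ‖v i‖ ^ 2)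

/-- Frobenius norm of a complex matrix. -/
def fnorm {k l : ℕ} (A : Matrix (Fin k) (Fin l) ℂ) : ℝ :=
  Real.sqrt (∑ i, ∑ j, ‖A i j‖ ^ 2)

/-- L2 operator norm of a square complex matrix. -/
def opNorm {k : ℕ} (A : Matrix (Fin k) (Fin k) ℂ) : ℝ :=
  ‖Matrix.toEuclideanCLM (𝕜 := ℂ) (n := Fin k) A‖

/-- Indicator function of a proposition. -/
def ind (P : Prop) : ℝ := if P then 1 else 0

/-- The loss ℓ_m(V, z) = min_{a : ‖a‖=1} ‖V - a zᴴ‖_F² / n. -/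
def lossM {k l : ℕ} (V : Matrix (Fin k) (Fin l) ℂ) (z : Fin l → ℂ) : ℝ :=
  sInf { r : ℝ | ∃ a : Fin k → ℂ, enorm a = 1 ∧
    r = fnorm (V - Matrix.vecMulVec a (star z)) ^ 2 / l }

/-- The loss ℓ_1(z', z) = min_{|a|=1} ‖z' - a z‖² / n. -/
def loss1 {l : ℕ} (z' z : Fin l → ℂ) : ℝ :=
  sInf { r : ℝ | ∃ a : ℂ, ‖a‖ = 1 ∧ r = enorm (z' - a • z) ^ 2 / l }

/-- The mapping F₁: entrywise normalization of Y z. -/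
def F1 {l : ℕ} (Y : Matrix (Fin l) (Fin l) ℂ) (z : Fin l → ℂ) : Fin l → ℂ :=
  fun j => if Y.mulVec z j ≠ 0 then Y.mulVec z j / (‖Y.mulVec z j‖ : ℂ) else z j

/-- jth column of a matrix. -/
def col {k l : ℕ} (A : Matrix (Fin k) (Fin l) ℂ) (j : Fin l) : Fin k → ℂ := fun i => A i j

/-- The mapping F_m: columnwise normalization of V Yᴴ. -/
def Fm {k l : ℕ} (Y : Matrix (Fin l) (Fin l) ℂ) (V : Matrix (Fin k) (Fin l) ℂ) :
    Matrix (Fin k) (Fin l) ℂ :=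
  Matrix.of fun i j =>
    if col (V * Yᴴ) j ≠ 0 then (V * Yᴴ) i j / ((enorm (col (V * Yᴴ) j) : ℝ) : ℂ) else V i j

/-- g_t(x) = x / max(|x|, t). -/
def gfun (t : ℝ) (x : ℂ) : ℂ := x / ((max ‖x‖ t : ℝ) : ℂ)

/-- The mapping G(z, s, t), coordinatewise g_t(z*_j s + σ [W z]_j). -/
def G {l : ℕ} (zstar : Fin l → ℂ) (σ : ℝ) (W : Matrix (Fin l) (Fin l) ℂ)
    (z : Fin l → ℂ) (s : ℂ) (t : ℝ) : Fin l → ℂ :=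
  fun j => gfun t (zstar j * s + (σ : ℂ) * W.mulVec z j)

/-- The mapping F₁'(z, s), entrywise normalization of z* s + σ W z. -/
def F1' {l : ℕ} (zstar : Fin l → ℂ) (σ : ℝ) (W : Matrix (Fin l) (Fin l) ℂ)
    (z : Fin l → ℂ) (s : ℂ) : Fin l → ℂ :=
  fun j =>
    if zstar j * s + (σ : ℂ) * W.mulVec z j ≠ 0 then
      (zstar j * s + (σ : ℂ) * W.mulVec z j) /
        ((‖zstar j * s + (σ : ℂ) * W.mulVec z j‖ : ℝ) : ℂ)
    else z j

/-- W with jth row and column zeroed out. -/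
def Wminus {l : ℕ} (W : Matrix (Fin l) (Fin l) ℂ) (j : Fin l) : Matrix (Fin l) (Fin l) ℂ :=
  Matrix.of fun k i => if k = j ∨ i = j then 0 else W k i

/-!
Write `N` for the noise `σW`, so that `Y = z* z*ᴴ + N`. Choose the unit vector `a` aligned with `Vz`
and let `D = V - a zᴴ`. Alignment makes `a` an optimal rotation, so `‖D‖_F ≤ 2ε√n`, and it forces
`Dz = -(‖D‖_F² / 2) a`. Thus `Dz` is quadratically small, which makes `Dz*` of size at most
`2ε√n ‖D‖_F`, and hence `‖D Yᴴ‖_F ≤ (2εn + ‖N‖) ‖D‖_F`. Both `V` and `a zᴴ` are columnwise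
normalizations of their products with `Yᴴ`, and normalizing a vector of length at least `δn` is
`2 / (δn)`-Lipschitz, so the columns of `D` with `|[Yz]_j| ≥ δn` carry at most half of `‖D‖_F²`.
Each of the remaining columns has squared norm at most `4`.
-/

section Norms

open scoped Matrix.Norms.Frobenius

variable {k l : ℕ}

lemma enorm_eq_norm_toLp (v : Fin k → ℂ) : enorm v = ‖WithLp.toLp 2 v‖ :=
  (EuclideanSpace.norm_eq _).symm

lemma fnorm_eq_frobenius_norm (A : Matrix (Fin k) (Fin l) ℂ) : fnorm A = ‖A‖ := by
  simp [fnorm, Matrix.frobenius_norm_def, Real.sqrt_eq_rpow]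

lemma enorm_nonneg (v : Fin k → ℂ) : 0 ≤ enorm v := Real.sqrt_nonneg _

lemma fnorm_nonneg (A : Matrix (Fin k) (Fin l) ℂ) : 0 ≤ fnorm A := Real.sqrt_nonneg _

lemma opNorm_nonneg (A : Matrix (Fin k) (Fin k) ℂ) : 0 ≤ opNorm A := norm_nonneg _

lemma enorm_sq (v : Fin k → ℂ) : enorm v ^ 2 = ∑ i, ‖v i‖ ^ 2 :=
  Real.sq_sqrt (by positivity)

lemma fnorm_sq (A : Matrix (Fin k) (Fin l) ℂ) : fnorm A ^ 2 = ∑ i, ∑ j, ‖A i j‖ ^ 2 :=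
  Real.sq_sqrt (by positivity)

lemma fnorm_sq_eq_sum_col (A : Matrix (Fin k) (Fin l) ℂ) :
    fnorm A ^ 2 = ∑ j, enorm (col A j) ^ 2 := by
  simp only [fnorm_sq, enorm_sq, col]
  exact Finset.sum_comm

lemma col_sub (A B : Matrix (Fin k) (Fin l) ℂ) (j : Fin l) :
    col (A - B) j = col A j - col B j := rfl

lemma enorm_smul (c : ℂ) (v : Fin k → ℂ) : enorm (c • v) = ‖c‖ * enorm v := by
  simp only [enorm_eq_norm_toLp, WithLp.toLp_smul, norm_smul]

lemma enorm_eq_zero {v : Fin k → ℂ} : enorm v = 0 ↔ v = 0 := by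
  simp [enorm_eq_norm_toLp]

lemma enorm_sub_le (v w : Fin k → ℂ) : enorm (v - w) ≤ enorm v + enorm w := by
  simpa only [enorm_eq_norm_toLp, WithLp.toLp_sub] using norm_sub_le _ _

lemma re_star_dotProduct_le (v w : Fin k → ℂ) : (star v ⬝ᵥ w).re ≤ enorm v * enorm w := by
  simpa only [enorm_eq_norm_toLp, EuclideanSpace.inner_toLp_toLp, dotProduct_comm,
    RCLike.re_eq_complex_re] using re_inner_le_norm (𝕜 := ℂ) (WithLp.toLp 2 v) (WithLp.toLp 2 w)

lemma star_dotProduct_self (v : Fin k → ℂ) : star v ⬝ᵥ v = ((enorm v ^ 2 : ℝ) : ℂ) := by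
  simp [enorm_sq, dotProduct, Complex.conj_mul']

lemma fnorm_add_le (A B : Matrix (Fin k) (Fin l) ℂ) : fnorm (A + B) ≤ fnorm A + fnorm B := by
  simpa only [fnorm_eq_frobenius_norm] using norm_add_le A B

lemma fnorm_conjTranspose (A : Matrix (Fin k) (Fin l) ℂ) : fnorm Aᴴ = fnorm A := by
  simp only [fnorm_eq_frobenius_norm, Matrix.frobenius_norm_conjTranspose]

lemma fnorm_vecMulVec_star (v : Fin k → ℂ) (w : Fin l → ℂ) :
    fnorm (vecMulVec v (star w)) = enorm v * enorm w := by
  refine (sq_eq_sq₀ (fnorm_nonneg _) (mul_nonneg (enorm_nonneg v) (enorm_nonneg w))).1 ?_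
  simp only [fnorm_sq, mul_pow, enorm_sq, vecMulVec_apply, Pi.star_apply, norm_mul, norm_star,
    Finset.sum_mul_sum]

lemma enorm_mulVec_le (A : Matrix (Fin k) (Fin l) ℂ) (v : Fin l → ℂ) :
    enorm (A *ᵥ v) ≤ fnorm A * enorm v := by
  have h := Matrix.frobenius_norm_mul A (replicateCol Unit v)
  rwa [← replicateCol_mulVec, frobenius_norm_replicateCol, frobenius_norm_replicateCol,
    ← fnorm_eq_frobenius_norm, ← enorm_eq_norm_toLp, ← enorm_eq_norm_toLp] at h

lemma enorm_mulVec_le_opNorm (A : Matrix (Fin k) (Fin k) ℂ) (v : Fin k → ℂ) :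
    enorm (A *ᵥ v) ≤ opNorm A * enorm v := by
  simpa only [enorm_eq_norm_toLp, opNorm, toEuclideanCLM_toLp] using
    (Matrix.toEuclideanCLM (𝕜 := ℂ) (n := Fin k) A).le_opNorm (WithLp.toLp 2 v)

lemma fnorm_mul_le_opNorm (A : Matrix (Fin k) (Fin k) ℂ) (B : Matrix (Fin k) (Fin l) ℂ) :
    fnorm (A * B) ≤ opNorm A * fnorm B := by
  refine le_of_sq_le_sq ?_ (mul_nonneg (opNorm_nonneg A) (fnorm_nonneg B))
  rw [mul_pow, fnorm_sq_eq_sum_col, fnorm_sq_eq_sum_col, Finset.mul_sum]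
  refine Finset.sum_le_sum fun j _ => ?_
  rw [← mul_pow]
  exact pow_le_pow_left₀ (enorm_nonneg _) (enorm_mulVec_le_opNorm A (col B j)) 2

lemma opNorm_ofReal_smul {r : ℝ} (hr : 0 ≤ r) (A : Matrix (Fin k) (Fin k) ℂ) :
    opNorm ((r : ℂ) • A) = r * opNorm A := by
  rw [opNorm, map_smul, norm_smul, Complex.norm_of_nonneg hr, opNorm]

lemma enorm_sq_of_norm_eq_one {z : Fin k → ℂ} (hz : ∀ j, ‖z j‖ = 1) : enorm z ^ 2 = k := by
  simp [enorm_sq, hz]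

lemma fnorm_sq_of_enorm_col_eq_one {V : Matrix (Fin k) (Fin l) ℂ}
    (hV : ∀ j, enorm (col V j) = 1) : fnorm V ^ 2 = l := by
  simp [fnorm_sq_eq_sum_col, hV]

end Norms

section Losses

variable {k l : ℕ}

lemma isCompact_setOf_enorm_eq_one : IsCompact {a : Fin k → ℂ | enorm a = 1} := by
  convert (isCompact_sphere (0 : EuclideanSpace ℂ (Fin k)) 1).image
    (PiLp.continuous_ofLp 2 fun _ : Fin k => ℂ) using 1
  ext a
  simp only [Set.mem_ofPred_eq, Set.mem_image, mem_sphere_zero_iff_norm, enorm_eq_norm_toLp]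
  exact ⟨fun ha => ⟨_, ha, rfl⟩, by rintro ⟨x, hx, rfl⟩; exact hx⟩

lemma exists_loss1_eq (z' z : Fin l → ℂ) :
    ∃ c : ℂ, ‖c‖ = 1 ∧ loss1 z' z = enorm (z' - c • z) ^ 2 / l := by
  have hcont : Continuous fun c : ℂ => enorm (z' - c • z) ^ 2 / l := by
    simp only [enorm, Pi.sub_apply, Pi.smul_apply]
    fun_prop
  obtain ⟨c, hc, hmin⟩ := (isCompact_sphere (0 : ℂ) 1).exists_sInf_image_eq
    (NormedSpace.sphere_nonempty.2 zero_le_one) hcont.continuousOn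
  refine ⟨c, mem_sphere_zero_iff_norm.1 hc, hmin ▸ ?_⟩
  simp only [loss1, Set.image, mem_sphere_zero_iff_norm, eq_comm]

lemma exists_lossM_eq {a₀ : Fin k → ℂ} (ha₀ : enorm a₀ = 1) (V : Matrix (Fin k) (Fin l) ℂ)
    (z : Fin l → ℂ) :
    ∃ b : Fin k → ℂ, enorm b = 1 ∧ lossM V z = fnorm (V - vecMulVec b (star z)) ^ 2 / l := by
  have hcont : Continuous fun b : Fin k → ℂ => fnorm (V - vecMulVec b (star z)) ^ 2 / l := by
    simp only [fnorm, Matrix.sub_apply, vecMulVec_apply]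
    fun_prop
  obtain ⟨b, hb, hmin⟩ := isCompact_setOf_enorm_eq_one.exists_sInf_image_eq
    ⟨a₀, ha₀⟩ hcont.continuousOn
  refine ⟨b, hb, hmin ▸ ?_⟩
  simp only [lossM, Set.image, Set.mem_ofPred_eq, eq_comm]

lemma lossM_le {a : Fin k → ℂ} (ha : enorm a = 1) (V : Matrix (Fin k) (Fin l) ℂ)
    (z : Fin l → ℂ) : lossM V z ≤ fnorm (V - vecMulVec a (star z)) ^ 2 / l := by
  refine csInf_le ⟨0, ?_⟩ ⟨a, ha, rfl⟩
  rintro _ ⟨b, -, rfl⟩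
  positivity

lemma le_mul_sqrt_of_sq_div_le {x y ε : ℝ} (hε : 0 ≤ ε) (hy : 0 < y)
    (h : x ^ 2 / y ≤ ε ^ 2) : x ≤ ε * √y := by
  refine le_of_sq_le_sq ?_ (by positivity)
  rwa [mul_pow, Real.sq_sqrt hy.le, ← div_le_iff₀ hy]

end Losses

section FixedPoints

variable {k l : ℕ} {Y : Matrix (Fin l) (Fin l) ℂ}

lemma mulVec_eq_norm_mul_of_F1_eq {z : Fin l → ℂ} (hz : z = F1 Y z) (j : Fin l) :
    (Y *ᵥ z) j = ‖(Y *ᵥ z) j‖ * z j := by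
  by_cases h0 : (Y *ᵥ z) j = 0
  · simp [h0]
  · have hj : z j = (Y *ᵥ z) j / ‖(Y *ᵥ z) j‖ := (congrFun hz j).trans (if_pos h0)
    refine ((congrArg _ hj).trans (mul_div_cancel₀ _ ?_)).symm
    simpa using h0

lemma col_mul_conjTranspose_eq_of_Fm_eq {V : Matrix (Fin k) (Fin l) ℂ} (hV : V = Fm Y V)
    (j : Fin l) : col (V * Yᴴ) j = (enorm (col (V * Yᴴ) j) : ℂ) • col V j := by
  by_cases h0 : col (V * Yᴴ) j = 0
  · simp [h0, enorm]
  · have hne : (enorm (col (V * Yᴴ) j) : ℂ) ≠ 0 := by simpa [enorm_eq_zero] using h0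
    ext i
    have hij : V i j = (V * Yᴴ) i j / enorm (col (V * Yᴴ) j) :=
      (congrFun₂ hV i j).trans (if_pos h0)
    exact ((congrArg _ hij).trans (mul_div_cancel₀ _ hne)).symm

lemma col_vecMulVec_star_mul_conjTranspose (a : Fin k → ℂ) (z : Fin l → ℂ) (j : Fin l) :
    col (vecMulVec a (star z) * Yᴴ) j = star ((Y *ᵥ z) j) • a := by
  ext i
  simp [col, vecMulVec_mul, vecMulVec_apply, ← star_mulVec, mul_comm]

end FixedPoints

lemma norm_mul_norm_sub_le_of_eq_norm_smul {𝕜 E : Type*} [RCLike 𝕜] [NormedAddCommGroup E]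
    [NormedSpace 𝕜 E] {x y u v : E} (hv : ‖v‖ ≤ 1) (hx : x = (‖x‖ : 𝕜) • v)
    (hy : y = (‖y‖ : 𝕜) • u) : ‖y‖ * ‖v - u‖ ≤ 2 * ‖x - y‖ := by
  have hsplit : (‖y‖ : 𝕜) • (v - u) = ((‖y‖ - ‖x‖ : ℝ) : 𝕜) • v + (x - y) := by
    rw [smul_sub, ← hy, RCLike.ofReal_sub, sub_smul, ← hx]
    abel
  calc ‖y‖ * ‖v - u‖ = ‖((‖y‖ - ‖x‖ : ℝ) : 𝕜) • v + (x - y)‖ := by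
        rw [← hsplit, norm_smul, RCLike.norm_ofReal, abs_norm]
    _ ≤ |‖y‖ - ‖x‖| * ‖v‖ + ‖x - y‖ := by
        simpa only [norm_smul, RCLike.norm_ofReal] using
          norm_add_le (((‖y‖ - ‖x‖ : ℝ) : 𝕜) • v) (x - y)
    _ ≤ ‖x - y‖ * 1 + ‖x - y‖ := by
        gcongr
        exact abs_sub_comm ‖y‖ ‖x‖ ▸ abs_norm_sub_norm_le x y
    _ = 2 * ‖x - y‖ := by ring

lemma enorm_mul_enorm_sub_le_of_eq_enorm_smul {k : ℕ} {x y u v : Fin k → ℂ} (hv : enorm v ≤ 1)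
    (hx : x = (enorm x : ℂ) • v) (hy : y = (enorm y : ℂ) • u) :
    enorm y * enorm (v - u) ≤ 2 * enorm (x - y) := by
  simp only [enorm_eq_norm_toLp] at *
  exact norm_mul_norm_sub_le_of_eq_norm_smul (𝕜 := ℂ) hv (congrArg (WithLp.toLp 2) hx)
    (congrArg (WithLp.toLp 2) hy)

lemma norm_mulVec_mul_enorm_col_le {k l : ℕ} {Y : Matrix (Fin l) (Fin l) ℂ} {z : Fin l → ℂ}
    {V : Matrix (Fin k) (Fin l) ℂ} {a : Fin k → ℂ} (hzfix : z = F1 Y z)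
    (hV : ∀ j, enorm (col V j) = 1) (hVfix : V = Fm Y V) (ha : enorm a = 1) (j : Fin l) :
    ‖(Y *ᵥ z) j‖ * enorm (col (V - vecMulVec a (star z)) j) ≤
      2 * enorm (col ((V - vecMulVec a (star z)) * Yᴴ) j) := by
  set U := vecMulVec a (star z) with hU
  have hnorm : enorm (col (U * Yᴴ) j) = ‖(Y *ᵥ z) j‖ := by
    rw [col_vecMulVec_star_mul_conjTranspose, enorm_smul, ha, norm_star, mul_one]
  have hUfix : col (U * Yᴴ) j = (enorm (col (U * Yᴴ) j) : ℂ) • col U j := by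
    have hstar : star ((Y *ᵥ z) j) = ‖(Y *ᵥ z) j‖ * star (z j) := by
      simpa using congrArg star (mulVec_eq_norm_mul_of_F1_eq hzfix j)
    rw [hnorm, col_vecMulVec_star_mul_conjTranspose, hstar, mul_smul]
    ext i
    simp [hU, col, vecMulVec_apply, mul_comm (a i)]
  rw [← hnorm, Matrix.sub_mul, col_sub, col_sub]
  exact enorm_mul_enorm_sub_le_of_eq_enorm_smul (hV j).le
    (col_mul_conjTranspose_eq_of_Fm_eq hVfix j) hUfix

section Alignment

variable {k l : ℕ} {V : Matrix (Fin k) (Fin l) ℂ} {z zstar : Fin l → ℂ} {a : Fin k → ℂ}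

/-- `a` is a unit vector in the direction of `V z`, equivalently a minimizer in the definition of
`lossM V z`. Any unit vector qualifies when `V z = 0`. -/
def IsAlignment (V : Matrix (Fin k) (Fin l) ℂ) (z : Fin l → ℂ) (a : Fin k → ℂ) : Prop :=
  enorm a = 1 ∧ V *ᵥ z = (enorm (V *ᵥ z) : ℂ) • a

lemma exists_isAlignment {a₀ : Fin k → ℂ} (ha₀ : enorm a₀ = 1) (V : Matrix (Fin k) (Fin l) ℂ)
    (z : Fin l → ℂ) : ∃ a, IsAlignment V z a := by
  by_cases h0 : V *ᵥ z = 0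
  · exact ⟨a₀, ha₀, by simp [h0, enorm_eq_zero.2 rfl]⟩
  · have hne : enorm (V *ᵥ z) ≠ 0 := mt enorm_eq_zero.1 h0
    refine ⟨(enorm (V *ᵥ z) : ℂ)⁻¹ • V *ᵥ z, ?_, ?_⟩
    · rw [enorm_smul, norm_inv, Complex.norm_of_nonneg (enorm_nonneg _), inv_mul_cancel₀ hne]
    · rw [smul_inv_smul₀ (Complex.ofReal_ne_zero.2 hne)]

lemma fnorm_sub_vecMulVec_star_sq (V : Matrix (Fin k) (Fin l) ℂ) (a : Fin k → ℂ)
    (z : Fin l → ℂ) :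
    fnorm (V - vecMulVec a (star z)) ^ 2 =
      fnorm V ^ 2 + enorm a ^ 2 * enorm z ^ 2 - 2 * (star a ⬝ᵥ V *ᵥ z).re := by
  have hentry (i : Fin k) (j : Fin l) : ‖V i j - a i * star (z j)‖ ^ 2 =
      ‖V i j‖ ^ 2 + ‖a i‖ ^ 2 * ‖z j‖ ^ 2 - 2 * (star (a i) * (V i j * z j)).re := by
    have hcross : V i j * star (a i * star (z j)) = star (a i) * (V i j * z j) := by
      rw [star_mul', star_star]
      ring
    rw [← hcross, ← norm_star (z j), ← mul_pow, ← norm_mul]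
    simp only [← Complex.normSq_eq_norm_sq]
    exact Complex.normSq_sub _ _
  rw [enorm_sq, enorm_sq, Finset.sum_mul_sum]
  simp only [fnorm_sq, Matrix.sub_apply, vecMulVec_apply, Pi.star_apply, hentry,
    Finset.sum_sub_distrib, Finset.sum_add_distrib, dotProduct, mulVec, Complex.re_sum,
    Finset.mul_sum]

namespace IsAlignment

lemma star_dotProduct_mulVec (h : IsAlignment V z a) :
    star a ⬝ᵥ V *ᵥ z = enorm (V *ᵥ z) := by
  rw [h.2, dotProduct_smul, star_dotProduct_self, h.1, ← h.2]
  simp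

lemma fnorm_residual_le (h : IsAlignment V z a) {b : Fin k → ℂ} (hb : enorm b = 1) :
    fnorm (V - vecMulVec a (star z)) ≤ fnorm (V - vecMulVec b (star z)) := by
  refine le_of_sq_le_sq ?_ (fnorm_nonneg _)
  have hre := re_star_dotProduct_le b (V *ᵥ z)
  rw [fnorm_sub_vecMulVec_star_sq, fnorm_sub_vecMulVec_star_sq, h.star_dotProduct_mulVec,
    Complex.ofReal_re, h.1, hb]
  rw [hb] at hre
  linarith

lemma residual_mulVec (h : IsAlignment V z a) (hVz : fnorm V = enorm z) :
    (V - vecMulVec a (star z)) *ᵥ z =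
      ((-(fnorm (V - vecMulVec a (star z)) ^ 2 / 2) : ℝ) : ℂ) • a := by
  have hsq : -(fnorm (V - vecMulVec a (star z)) ^ 2 / 2) = enorm (V *ᵥ z) - enorm z ^ 2 := by
    rw [fnorm_sub_vecMulVec_star_sq, h.star_dotProduct_mulVec, Complex.ofReal_re, h.1, hVz]
    ring
  rw [hsq, sub_mulVec, vecMulVec_mulVec, star_dotProduct_self, op_smul_eq_smul,
    Complex.ofReal_sub, sub_smul, ← h.2]

lemma enorm_residual_mulVec (h : IsAlignment V z a) (hVz : fnorm V = enorm z) :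
    enorm ((V - vecMulVec a (star z)) *ᵥ z) = fnorm (V - vecMulVec a (star z)) ^ 2 / 2 := by
  rw [h.residual_mulVec hVz, enorm_smul, h.1, mul_one, Complex.norm_real, norm_neg,
    Real.norm_of_nonneg (by positivity)]

end IsAlignment

lemma fnorm_sub_vecMulVec_smul_le {b : Fin k → ℂ} (hb : enorm b = 1) {c : ℂ} (hc : ‖c‖ = 1)
    (V : Matrix (Fin k) (Fin l) ℂ) (z zstar : Fin l → ℂ) :
    fnorm (V - vecMulVec (c • b) (star z)) ≤
      fnorm (V - vecMulVec b (star zstar)) + enorm (z - c • zstar) := by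
  have hcc : c * star c = 1 := by simp [Complex.mul_conj', hc]
  have hsplit : V - vecMulVec (c • b) (star z) =
      (V - vecMulVec b (star zstar)) + vecMulVec (-c • b) (star (z - c • zstar)) := by
    ext i j
    simp only [Matrix.sub_apply, Matrix.add_apply, vecMulVec_apply, Pi.smul_apply, smul_eq_mul,
      Pi.star_apply, Pi.sub_apply, star_sub, star_mul']
    linear_combination -b i * star (zstar j) * hcc
  have hnorm : fnorm (vecMulVec (-c • b) (star (z - c • zstar))) = enorm (z - c • zstar) := by
    rw [fnorm_vecMulVec_star, enorm_smul, norm_neg, hc, hb, one_mul, one_mul]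
  rw [hsplit, ← hnorm]
  exact fnorm_add_le _ _

lemma IsAlignment.enorm_residual_mulVec_le (h : IsAlignment V z a) (hVz : fnorm V = enorm z)
    {τ : ℝ} {b : Fin k → ℂ} (hb : enorm b = 1) (hVb : fnorm (V - vecMulVec b (star zstar)) ≤ τ)
    {c : ℂ} (hc : ‖c‖ = 1) (hzc : enorm (z - c • zstar) ≤ τ) :
    enorm ((V - vecMulVec a (star z)) *ᵥ zstar) ≤
      2 * τ * fnorm (V - vecMulVec a (star z)) := by
  have hDz := h.enorm_residual_mulVec hVz
  have hD : fnorm (V - vecMulVec a (star z)) ≤ 2 * τ := by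
    have hcb : enorm (c • b) = 1 := by rw [enorm_smul, hc, hb, one_mul]
    linarith [h.fnorm_residual_le hcb, fnorm_sub_vecMulVec_smul_le hb hc V z zstar]
  set D := V - vecMulVec a (star z)
  calc enorm (D *ᵥ zstar)
      = enorm (D *ᵥ z - D *ᵥ (z - c • zstar)) := by
        rw [mulVec_sub, sub_sub_cancel, mulVec_smul, enorm_smul, hc, one_mul]
    _ ≤ fnorm D ^ 2 / 2 + fnorm D * enorm (z - c • zstar) :=
        (enorm_sub_le _ _).trans (add_le_add hDz.le (enorm_mulVec_le _ _))
    _ ≤ fnorm D * (2 * τ) / 2 + fnorm D * τ := by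
        have := fnorm_nonneg D
        rw [sq]
        gcongr
    _ = 2 * τ * fnorm D := by ring

end Alignment

lemma fnorm_mul_conjTranspose_signal_add_noise_le {k l : ℕ} (D : Matrix (Fin k) (Fin l) ℂ)
    (zstar : Fin l → ℂ) (N : Matrix (Fin l) (Fin l) ℂ) :
    fnorm (D * (vecMulVec zstar (star zstar) + N)ᴴ) ≤
      enorm (D *ᵥ zstar) * enorm zstar + opNorm N * fnorm D := by
  have hnoise : fnorm (D * Nᴴ) ≤ opNorm N * fnorm D := by
    rw [← fnorm_conjTranspose, conjTranspose_mul, conjTranspose_conjTranspose,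
      ← fnorm_conjTranspose D]
    exact fnorm_mul_le_opNorm N Dᴴ
  rw [conjTranspose_add, conjTranspose_vecMulVec, star_star, Matrix.mul_add, mul_vecMulVec,
    ← fnorm_vecMulVec_star]
  exact (fnorm_add_le _ _).trans (by gcongr)

lemma eight_mul_sq_le_sq_mul_sq {p x s t : ℝ} (hp : 0 ≤ p) (hs : 0 ≤ s) (hpx : p ≤ s * x)
    (hst : 2 * √2 * s ≤ t) : 8 * p ^ 2 ≤ t ^ 2 * x ^ 2 :=
  calc 8 * p ^ 2 ≤ 8 * (s * x) ^ 2 := by gcongr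
    _ = (2 * √2 * s) ^ 2 * x ^ 2 := by
        simp only [mul_pow, Real.sq_sqrt zero_le_two]
        ring
    _ ≤ t ^ 2 * x ^ 2 := by gcongr

lemma sum_sq_le_eight_mul_sum_ind {ι : Type*} [Fintype ι] {x p ρ : ι → ℝ} {t : ℝ} (ht : 0 < t)
    (hx0 : ∀ j, 0 ≤ x j) (hx2 : ∀ j, x j ≤ 2) (hρ : ∀ j, ρ j * x j ≤ 2 * p j)
    (hp : 8 * ∑ j, p j ^ 2 ≤ t ^ 2 * ∑ j, x j ^ 2) :
    ∑ j, x j ^ 2 ≤ 8 * ∑ j, ind (ρ j < t) := by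
  have hterm (j : ι) : t ^ 2 * x j ^ 2 ≤ 4 * p j ^ 2 + 4 * t ^ 2 * ind (ρ j < t) := by
    by_cases hj : ρ j < t
    · have hsq : x j ^ 2 ≤ 4 := by nlinarith [hx0 j, hx2 j]
      rw [ind, if_pos hj]
      nlinarith [mul_le_mul_of_nonneg_left hsq (sq_nonneg t), sq_nonneg (p j)]
    · have htx : t * x j ≤ 2 * p j :=
        (mul_le_mul_of_nonneg_right (not_lt.1 hj) (hx0 j)).trans (hρ j)
      have hsq := pow_le_pow_left₀ (mul_nonneg ht.le (hx0 j)) htx 2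
      rw [ind, if_neg hj]
      linarith
  have hsum := Finset.sum_le_sum fun j (_ : j ∈ Finset.univ) => hterm j
  rw [Finset.sum_add_distrib, ← Finset.mul_sum, ← Finset.mul_sum, ← Finset.mul_sum] at hsum
  refine le_of_mul_le_mul_left ?_ (pow_pos ht 2)
  linarith

section Residual

variable {n m : ℕ} {zstar : Fin n → ℂ} {N : Matrix (Fin n) (Fin n) ℂ} {ε : ℝ} {z : Fin n → ℂ}
  {V : Matrix (Fin m) (Fin n) ℂ} {a : Fin m → ℂ}

lemma IsAlignment.fnorm_residual_mul_conjTranspose_le (h : IsAlignment V z a) (hn : 0 < n)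
    (hzstar : enorm zstar ≤ √n) (hVz : fnorm V = enorm z) (hε : 0 ≤ ε)
    (hzloss : loss1 z zstar ≤ ε ^ 2) (hVloss : lossM V zstar ≤ ε ^ 2) :
    fnorm ((V - vecMulVec a (star z)) * (vecMulVec zstar (star zstar) + N)ᴴ) ≤
      (2 * ε * n + opNorm N) * fnorm (V - vecMulVec a (star z)) := by
  have hn0 : (0 : ℝ) < n := by exact_mod_cast hn
  obtain ⟨c, hc, hzc⟩ := exists_loss1_eq z zstar
  obtain ⟨b, hb, hVb⟩ := exists_lossM_eq h.1 V zstar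
  have hDzstar := h.enorm_residual_mulVec_le hVz hb
    (le_mul_sqrt_of_sq_div_le hε hn0 (hVb ▸ hVloss)) hc
    (le_mul_sqrt_of_sq_div_le hε hn0 (hzc ▸ hzloss))
  set D := V - vecMulVec a (star z)
  have hD := fnorm_nonneg D
  calc fnorm (D * (vecMulVec zstar (star zstar) + N)ᴴ)
      ≤ enorm (D *ᵥ zstar) * enorm zstar + opNorm N * fnorm D :=
        fnorm_mul_conjTranspose_signal_add_noise_le D zstar N
    _ ≤ 2 * (ε * √n) * fnorm D * √n + opNorm N * fnorm D := by
        have := enorm_nonneg zstar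
        gcongr
    _ = (2 * ε * n + opNorm N) * fnorm D := by
        linear_combination 2 * ε * fnorm D * Real.mul_self_sqrt n.cast_nonneg

lemma enorm_col_residual_le_two (hz : ∀ j, ‖z j‖ = 1) (hV : ∀ j, enorm (col V j) = 1)
    (ha : enorm a = 1) (j : Fin n) : enorm (col (V - vecMulVec a (star z)) j) ≤ 2 := by
  have hcol : col (V - vecMulVec a (star z)) j = col V j - star (z j) • a := by
    rw [col_sub]
    ext i
    simp [col, vecMulVec_apply, mul_comm]
  calc _ ≤ enorm (col V j) + enorm (star (z j) • a) := hcol ▸ enorm_sub_le _ _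
    _ = 2 := by rw [enorm_smul, norm_star, hz, hV, ha]; norm_num

end Residual

theorem stmt1_general {n m : ℕ} (hn : 1 ≤ n)
    (zstar : Fin n → ℂ) (hzstar : enorm zstar ≤ √n)
    (N Y : Matrix (Fin n) (Fin n) ℂ) (hY : Y = vecMulVec zstar (star zstar) + N)
    (ε : ℝ) (hε : 0 < ε)
    (z : Fin n → ℂ) (hz1 : ∀ j, ‖z j‖ = 1) (hz2 : loss1 z zstar ≤ ε ^ 2)
    (hzfix : z = F1 Y z)
    (V : Matrix (Fin m) (Fin n) ℂ) (hV1 : ∀ j, enorm (col V j) = 1)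
    (hV2 : lossM V zstar ≤ ε ^ 2) (hVfix : V = Fm Y V)
    (δ : ℝ) (hδ : 2 * √2 * (2 * ε + opNorm N / n) ≤ δ) :
    lossM V z ≤ (8 / (n : ℝ)) * ∑ j : Fin n, ind (‖Y.mulVec z j‖ < δ * n) := by
  have hn0 : (0 : ℝ) < n := by exact_mod_cast hn
  have hN := opNorm_nonneg N
  obtain ⟨a, ha⟩ := exists_isAlignment (hV1 ⟨0, hn⟩) V z
  have hVz : fnorm V = enorm z := (sq_eq_sq₀ (fnorm_nonneg V) (enorm_nonneg z)).1 <|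
    (fnorm_sq_of_enorm_col_eq_one hV1).trans (enorm_sq_of_norm_eq_one hz1).symm
  have hDY := ha.fnorm_residual_mul_conjTranspose_le (N := N) hn hzstar hVz hε.le hz2 hV2
  rw [← hY] at hDY
  have hδn : 2 * √2 * (2 * ε * n + opNorm N) ≤ δ * n := by
    refine le_of_eq_of_le ?_ (mul_le_mul_of_nonneg_right hδ hn0.le)
    field_simp
  have hcols := norm_mulVec_mul_enorm_col_le hzfix hV1 hVfix ha.1
  have hcols2 := enorm_col_residual_le_two hz1 hV1 ha.1
  refine (lossM_le ha.1 V z).trans ?_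
  set D := V - vecMulVec a (star z)
  have henergy := eight_mul_sq_le_sq_mul_sq (fnorm_nonneg _) (by positivity) hDY hδn
  rw [fnorm_sq_eq_sum_col, fnorm_sq_eq_sum_col D] at henergy
  rw [fnorm_sq_eq_sum_col, div_mul_eq_mul_div]
  gcongr
  exact sum_sq_le_eight_mul_sum_ind (lt_of_lt_of_le (by positivity) hδn)
    (fun j => enorm_nonneg _) hcols2 hcols henergy

theorem stmt1 {n m : ℕ} (hn : 1 ≤ n) (hm : 2 ≤ m)
    (zstar : Fin n → ℂ) (hzstar : ∀ j, ‖zstar j‖ = 1)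
    (σ : ℝ) (hσ : 0 < σ) (W : Matrix (Fin n) (Fin n) ℂ) (hW : W.IsHermitian)
    (Y : Matrix (Fin n) (Fin n) ℂ)
    (hY : Y = Matrix.vecMulVec zstar (star zstar) + (σ : ℂ) • W)
    (ε : ℝ) (hε : 0 < ε ∧ ε < 1 / 2)
    (z : Fin n → ℂ) (hz1 : ∀ j, ‖z j‖ = 1) (hz2 : loss1 z zstar ≤ ε ^ 2)
    (hzfix : z = F1 Y z)
    (V : Matrix (Fin m) (Fin n) ℂ) (hV1 : ∀ j, enorm (col V j) = 1)
    (hV2 : lossM V zstar ≤ ε ^ 2) (hVfix : V = Fm Y V)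
    (δ : ℝ) (hδ : 2 * Real.sqrt 2 * (6 * ε + σ * opNorm W / n) ≤ δ) :
    lossM V z ≤ (8 / (n : ℝ)) * ∑ j : Fin n, ind (‖Y.mulVec z j‖ < δ * n) := by
  have hzstar_norm : enorm zstar ≤ √n := by simp [enorm, hzstar]
  refine stmt1_general hn zstar hzstar_norm ((σ : ℂ) • W) Y hY ε hε.1 z hz1 hz2 hzfix V hV1 hV2
    hVfix δ (le_trans ?_ hδ)
  rw [opNorm_ofReal_smul hσ.le]
  gcongr <;> linarith [hε.1]

end PhaseSync
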